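/- arXiv:2111.07493 — 4 statements merged into one kernel-verified Lean document; each statement's English description precedes it below -/
import Mathlib

section
/- Let q be a positive integer and let a₁,…,a_q and u₁,…,u_q be real numbers with |u₁| > |u₂| > … > |u_q| > 0 (in particular each u_p is nonzero). Let (b_s)_{s≥1} and (v_s)_{s≥1} be sequences of real numbers such that the sequence (|v_s|)_{s≥1} is strictly decreasing, and suppose that for every integer n > 0 the series Σ_{s=1}^∞ b_s·v_sⁿ converges absolutely and Σ_{p=1}^q n·a_p·u_pⁿ = Σ_{s=1}^∞ b_s·v_sⁿ. Then a_p = 0 for all p = 1,…,q. -/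
/-!
By linearity, `∑ a_p u_p P'(u_p) = ∑ b_s P(v_s)` for every polynomial `P` with `P(0) = 0`. The right
side is a functional of order zero supported on a bounded set, whereas the left side is of order one
at each `u_p` with `a_p u_p ≠ 0`. To isolate `u_r`, take `P = G T`, where `G` is fixed, vanishes at
`0` and to second order at the other `u_p`, and `T` has slope `1` at its zero `u_r` but is uniformly
small on the `v_s`; such a `T` is `(X - u_r) (1 - ((X - u_r) / M)²) ^ k`, with `M` and then `k`
large. The identity becomes `a_r u_r G(u_r) = ∑ b_s G(v_s) T(v_s)`, whose right side is arbitrarily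
small.
-/

open Polynomial

theorem hasSum_mul_eval_of_hasSum_mul_pow {R ι κ : Type*} [CommSemiring R] [TopologicalSpace R]
    [IsTopologicalSemiring R] [Fintype ι] {a u : ι → R} {b v : κ → R}
    (h : ∀ n : ℕ, 0 < n → HasSum (fun s => b s * v s ^ n) (∑ p, (n : R) * a p * u p ^ n))
    {P : R[X]} (hP : P.coeff 0 = 0) :
    HasSum (fun s => b s * P.eval (v s)) (∑ p, a p * u p * P.derivative.eval (u p)) := by
  have support_pos {n : ℕ} (hn : n ∈ P.support) : 0 < n :=
    Nat.pos_of_ne_zero fun h0 => mem_support_iff.1 hn (h0 ▸ hP)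
  have hterm (s : κ) : b s * P.eval (v s) = ∑ n ∈ P.support, P.coeff n * (b s * v s ^ n) := by
    rw [eval_eq_sum, sum_def, Finset.mul_sum]
    exact Finset.sum_congr rfl fun n _ => mul_left_comm _ _ _
  have hlimit : ∑ p, a p * u p * P.derivative.eval (u p) =
      ∑ n ∈ P.support, P.coeff n * ∑ p, (n : R) * a p * u p ^ n := by
    simp only [derivative_eval, sum_def, Finset.mul_sum]
    rw [Finset.sum_comm]
    refine Finset.sum_congr rfl fun n hn => Finset.sum_congr rfl fun p _ => ?_
    rw [← mul_pow_sub_one (support_pos hn).ne' (u p)]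
    ring
  simp only [hterm, hlimit]
  exact hasSum_sum fun n hn => (h n (support_pos hn)).mul_left (P.coeff n)

section OrderedField

variable {K : Type*} [Field K] [LinearOrder K] [IsStrictOrderedRing K]

theorem natCast_mul_mul_one_sub_pow_le_one {t : K} (ht₀ : 0 ≤ t) (ht₁ : t ≤ 1) (k : ℕ) :
    k * t * (1 - t) ^ k ≤ 1 := by
  have : 0 ≤ 1 - t := sub_nonneg.2 ht₁
  calc
    k * t * (1 - t) ^ k ≤ (1 + t) ^ k * (1 - t) ^ k := by
      gcongr
      linarith [one_add_mul_le_pow (show -2 ≤ t by linarith) k]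
    _ = (1 - t ^ 2) ^ k := by rw [← mul_pow]; ring
    _ ≤ 1 := pow_le_one₀ (by nlinarith) (by nlinarith)

variable [Archimedean K]

theorem exists_forall_abs_mul_one_sub_sq_pow_le {ε : K} (hε : 0 < ε) :
    ∃ k : ℕ, ∀ y : K, |y| ≤ 1 → |y * (1 - y ^ 2) ^ k| ≤ ε := by
  obtain ⟨k, hk⟩ := exists_nat_gt (1 / ε ^ 2)
  have hk₀ : (0 : K) < k := lt_of_le_of_lt (by positivity) hk
  refine ⟨k, fun y hy => abs_le_of_sq_le_sq ?_ hε.le⟩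
  have hy₁ : y ^ 2 ≤ 1 := (sq_le_one_iff_abs_le_one y).2 hy
  have hy₀ : 0 ≤ 1 - y ^ 2 := sub_nonneg.2 hy₁
  calc
    (y * (1 - y ^ 2) ^ k) ^ 2 = y ^ 2 * (1 - y ^ 2) ^ k * (1 - y ^ 2) ^ k := by ring
    _ ≤ y ^ 2 * (1 - y ^ 2) ^ k :=
      mul_le_of_le_one_right (by positivity)
        (pow_le_one₀ hy₀ (sub_le_self 1 (sq_nonneg y)))
    _ ≤ 1 / k := by
      rw [le_div_iff₀' hk₀, ← mul_assoc]
      exact natCast_mul_mul_one_sub_pow_le_one (sq_nonneg y) hy₁ k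
    _ ≤ ε ^ 2 := (one_div_lt (by positivity) hk₀).1 hk |>.le

theorem exists_polynomial_derivative_eval_eq_one_and_abs_eval_le (x₀ R : K) {ε : K} (hε : 0 < ε) :
    ∃ T : K[X], T.eval x₀ = 0 ∧ T.derivative.eval x₀ = 1 ∧
      ∀ x, |x| ≤ R → |T.eval x| ≤ ε := by
  set M : K := |R| + |x₀| + 1
  have hM : 0 < M := by positivity
  obtain ⟨k, hk⟩ := exists_forall_abs_mul_one_sub_sq_pow_le (div_pos hε hM)
  refine ⟨(X - C x₀) * (1 - (C M⁻¹ * (X - C x₀)) ^ 2) ^ k, by simp, by simp [derivative_mul],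
    fun x hx => ?_⟩
  set y : K := M⁻¹ * (x - x₀) with hy
  have hxy : x - x₀ = M * y := (mul_inv_cancel_left₀ hM.ne' _).symm
  have hy₁ : |y| ≤ 1 := by
    rw [hy, abs_mul, abs_of_pos (inv_pos.2 hM), inv_mul_le_one₀ hM]
    linarith [abs_sub x x₀, le_abs_self R]
  calc
    |((X - C x₀) * (1 - (C M⁻¹ * (X - C x₀)) ^ 2) ^ k).eval x|
        = |(x - x₀) * (1 - y ^ 2) ^ k| := by
      simp only [eval_mul, eval_pow, eval_sub, eval_X, eval_C, eval_one, hy]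
    _ = M * |y * (1 - y ^ 2) ^ k| := by rw [hxy, mul_assoc, abs_mul, abs_of_pos hM]
    _ ≤ M * (ε / M) := by gcongr; exact hk y hy₁
    _ = ε := mul_div_cancel₀ ε hM.ne'

end OrderedField

theorem eval_derivative_eq_zero_of_sq_dvd {R : Type*} [CommRing R] {P : R[X]} {x : R}
    (h : (X - C x) ^ 2 ∣ P) : P.derivative.eval x = 0 :=
  dvd_iff_isRoot.1 (by simpa using pow_sub_one_dvd_derivative_of_pow_dvd h)

theorem exists_polynomial_sq_dvd_of_notMem {R : Type*} [CommRing R] [IsDomain R] {x : R}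
    (hx : x ≠ 0) {s : Finset R} (hxs : x ∉ s) :
    ∃ G : R[X], G.coeff 0 = 0 ∧ G.eval x ≠ 0 ∧ ∀ y ∈ s, (X - C y) ^ 2 ∣ G := by
  refine ⟨X * ∏ y ∈ s, (X - C y) ^ 2, by simp, ?_, fun y hy =>
    (Finset.dvd_prod_of_mem _ hy).mul_left X⟩
  rw [eval_mul, eval_X, eval_prod]
  refine mul_ne_zero hx (Finset.prod_ne_zero_iff.2 fun y hy => ?_)
  simpa [sub_eq_zero] using ne_of_mem_of_not_mem hy hxs |>.symm

theorem technical_lemma_general {ι κ : Type*} [Fintype ι] {a u : ι → ℝ}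
    (hu : Function.Injective u) {b v : κ → ℝ} {R : ℝ} (hv : ∀ s, |v s| ≤ R)
    (h : ∀ n : ℕ, 0 < n → HasSum (fun s => b s * v s ^ n) (∑ p, (n : ℝ) * a p * u p ^ n))
    {r : ι} (hr : u r ≠ 0) : a r = 0 := by
  obtain ⟨G, hG₀, hGr, hG⟩ := exists_polynomial_sq_dvd_of_notMem hr
    (Finset.notMem_erase (u r) (Finset.univ.image u))
  have hsummable : Summable fun s => |b s * G.eval (v s)| :=
    (hasSum_mul_eval_of_hasSum_mul_pow h hG₀).summable.abs
  set B : ℝ := ∑' s, |b s * G.eval (v s)|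
  have hle (ε : ℝ) (hε : 0 < ε) : |a r * u r * G.eval (u r)| ≤ B * ε := by
    obtain ⟨T, hTr, hTr', hT⟩ :=
      exists_polynomial_derivative_eval_eq_one_and_abs_eval_le (u r) R hε
    have hsum := hasSum_mul_eval_of_hasSum_mul_pow h (P := G * T) (by simp [hG₀])
    have hderiv_r : (derivative (G * T)).eval (u r) = G.eval (u r) := by
      simp [derivative_mul, hTr, hTr']
    have hderiv (p : ι) (hp : p ≠ r) : (derivative (G * T)).eval (u p) = 0 :=
      eval_derivative_eq_zero_of_sq_dvd <|
        (hG (u p) (by simpa using hu.ne hp)).mul_right T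
    rw [Fintype.sum_eq_single r fun p hp => by rw [hderiv p hp, mul_zero], hderiv_r] at hsum
    rw [← hsum.tsum_eq, ← Real.norm_eq_abs]
    refine tsum_of_norm_bounded (hsummable.hasSum.mul_right ε) fun s => ?_
    rw [eval_mul, ← mul_assoc, Real.norm_eq_abs, abs_mul]
    gcongr
    exact hT (v s) (hv s)
  have hzero : a r * u r * G.eval (u r) = 0 := by
    rw [← abs_nonpos_iff, ← mul_zero B]
    refine le_mul_of_forall_lt₀ fun B' hB' ε hε => (hle ε hε).trans ?_
    gcongr
  simpa [hr, hGr] using hzero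

/-- **Lemma 5.16 of Bridgeman–Canary–Sambarino.**
If `∑_{p=1}^q n a_p u_p^n = ∑_{s=1}^∞ b_s v_s^n` for all positive integers `n`,
where `|u₁| > … > |u_q| > 0`, each `u_p ≠ 0`, `(|v_s|)` is strictly decreasing, and the
right-hand series converges absolutely, then all `a_p` vanish. -/
theorem technical_lemma (q : ℕ) (hq : 0 < q) (a u : Fin q → ℝ)
    (hu : StrictAnti fun p => |u p|) (hu0 : ∀ p, u p ≠ 0)
    (b v : ℕ → ℝ) (hv : StrictAnti fun s => |v s|)
    (habs : ∀ n : ℕ, 0 < n → Summable fun s => |b s * v s ^ n|)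
    (heq : ∀ n : ℕ, 0 < n → ∑ p, (n : ℝ) * a p * u p ^ n = ∑' s, b s * v s ^ n) :
    ∀ p, a p = 0 := fun p =>
  have hu_inj : Function.Injective u := Function.Injective.of_comp (f := abs) hu.injective
  technical_lemma_general hu_inj (fun s => hv.antitone s.zero_le)
    (fun n hn => heq n hn ▸ (habs n hn).of_abs.hasSum) (hu0 p)
end

section
/- Let d ≥ 1 and let (a₁,…,a_d) and (b₁,…,b_d) be two bases of ℝ^d such that any d distinct vectors chosen among the list a₁,…,a_d,b₁,…,b_d are linearly independent. For each i let pᵢ : ℝ^d → ℝ^d be the linear projection with range span(aᵢ) and kernel span{aₖ : k ≠ i}, and for each j let qⱼ be the linear projection with range span(bⱼ) and kernel span{bₖ : k ≠ j}. Then tr(pᵢ ∘ qⱼ) ≠ 0 for all i, j ∈ {1,…,d}. -/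
/-!
A rank-one endomorphism has the form `z ↦ α z • x`, and the trace of the composition of
`z ↦ α z • x` with `z ↦ β z • y` is `α y * β x`. So the trace of `pᵢ ∘ qⱼ` is nonzero exactly when
`pᵢ bⱼ ≠ 0` and `qⱼ aᵢ ≠ 0`. In terms of the kernels, this says that the family `a` with `aᵢ`
replaced by `bⱼ`, and the family `b` with `bⱼ` replaced by `aᵢ`, are linearly independent.
-/

section RankOne

theorem exists_eq_smulRight_of_range_le_span_singleton {R M N : Type*} [Semiring R]
    [AddCommMonoid M] [Module R M] [Module.Projective R M] [AddCommMonoid N] [Module R N]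
    {f : M →ₗ[R] N} {x : N} (hf : LinearMap.range f ≤ R ∙ x) :
    ∃ α : M →ₗ[R] R, f = α.smulRight x := by
  have hmem : ∀ z, f z ∈ LinearMap.range (LinearMap.toSpanSingleton R N x) := fun z => by
    rw [LinearMap.range_toSpanSingleton]
    exact hf (LinearMap.mem_range_self f z)
  obtain ⟨α, hα⟩ := Module.projective_lifting_property
    (LinearMap.toSpanSingleton R N x).rangeRestrict (f.codRestrict _ hmem)
    (LinearMap.surjective_rangeRestrict _)
  exact ⟨α, LinearMap.ext fun z => congrArg Subtype.val (LinearMap.congr_fun hα z).symm⟩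

variable {R M : Type*} [CommRing R] [AddCommGroup M] [Module R M] [Module.Free R M]
  [Module.Finite R M]

theorem trace_smulRight_comp_smulRight (α β : M →ₗ[R] R) (x y : M) :
    LinearMap.trace R M (α.smulRight x ∘ₗ β.smulRight y) = α y * β x := by
  have hcomp : α.smulRight x ∘ₗ β.smulRight y = α y • β.smulRight x := by
    ext z
    simp [smul_smul, mul_comm]
  rw [hcomp, map_smul, LinearMap.trace_smulRight, smul_eq_mul]

theorem trace_comp_ne_zero_iff_of_range_le_span_singleton [IsDomain R] {p q : M →ₗ[R] M} {x y : M}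
    (hp : LinearMap.range p ≤ R ∙ x) (hq : LinearMap.range q ≤ R ∙ y) :
    LinearMap.trace R M (p ∘ₗ q) ≠ 0 ↔ p y ≠ 0 ∧ q x ≠ 0 := by
  obtain ⟨α, rfl⟩ := exists_eq_smulRight_of_range_le_span_singleton hp
  obtain ⟨β, rfl⟩ := exists_eq_smulRight_of_range_le_span_singleton hq
  have hx : β x ≠ 0 → x ≠ 0 := mt fun h => by rw [h, map_zero]
  have hy : α y ≠ 0 → y ≠ 0 := mt fun h => by rw [h, map_zero]
  rw [trace_smulRight_comp_smulRight, LinearMap.smulRight_apply, LinearMap.smulRight_apply,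
    mul_ne_zero_iff, smul_ne_zero_iff, smul_ne_zero_iff]
  tauto

end RankOne

theorem linearIndependent_update_iff {ι K V : Type*} [DecidableEq ι] [DivisionRing K]
    [AddCommGroup V] [Module K V] {v : ι → V} {i : ι} {x : V} :
    LinearIndependent K (Function.update v i x) ↔
      LinearIndepOn K v {k | k ≠ i} ∧ x ∉ Submodule.span K (v '' {k | k ≠ i}) := by
  have hagree : Set.EqOn (Function.update v i x) v {k | k ≠ i} := fun k hk =>
    Function.update_of_ne hk x v
  have huniv : insert i {k | k ≠ i} = Set.univ := by
    ext k
    simp [em]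
  rw [← linearIndepOn_univ_iff, ← huniv, linearIndepOn_insert (by simp),
    linearIndepOn_congr hagree, hagree.image_eq, Function.update_self]

theorem injective_update_of_notMem_range {α β : Type*} [DecidableEq α] {f : α → β}
    (hf : Function.Injective f) (i : α) {y : β} (hy : y ∉ Set.range f) :
    Function.Injective (Function.update f i y) := by
  intro k l hkl
  grind [Function.Injective, Function.update_apply]

theorem linearIndependent_update_comp {ι κ R M : Type*} [DecidableEq ι] [Semiring R]
    [AddCommMonoid M] [Module R M] (v : κ → M)
    (hv : ∀ c : ι → κ, Function.Injective c → LinearIndependent R (v ∘ c))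
    {c : ι → κ} (hc : Function.Injective c) (i : ι) {k : κ} (hk : k ∉ Set.range c) :
    LinearIndependent R (Function.update (v ∘ c) i (v k)) := by
  rw [← Function.comp_update]
  exact hv _ (injective_update_of_notMem_range hc i hk)

theorem trace_projections_ne_zero_general {ι κ K V : Type*} [DecidableEq ι] [DecidableEq κ]
    [Field K] [AddCommGroup V] [Module K V] [FiniteDimensional K V] {a : ι → V} {b : κ → V}
    (ha : LinearIndependent K a) (hb : LinearIndependent K b) {i : ι} {j : κ} {p q : V →ₗ[K] V}
    (hpr : LinearMap.range p = K ∙ a i)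
    (hpk : LinearMap.ker p = Submodule.span K (a '' {k | k ≠ i}))
    (hqr : LinearMap.range q = K ∙ b j)
    (hqk : LinearMap.ker q = Submodule.span K (b '' {k | k ≠ j})) :
    LinearMap.trace K V (p ∘ₗ q) ≠ 0 ↔
      LinearIndependent K (Function.update a i (b j)) ∧
        LinearIndependent K (Function.update b j (a i)) := by
  have hp : p (b j) ≠ 0 ↔ LinearIndependent K (Function.update a i (b j)) := by
    rw [linearIndependent_update_iff, and_iff_right (ha.linearIndepOn _), ← hpk, LinearMap.mem_ker]
  have hq : q (a i) ≠ 0 ↔ LinearIndependent K (Function.update b j (a i)) := by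
    rw [linearIndependent_update_iff, and_iff_right (hb.linearIndepOn _), ← hqk, LinearMap.mem_ker]
  rw [trace_comp_ne_zero_iff_of_range_le_span_singleton hpr.le hqr.le, hp, hq]

/-- Let `(a₁, …, a_d)` and `(b₁, …, b_d)` be two bases of `ℝ^d` such that any `d`
distinct vectors chosen among `a₁, …, a_d, b₁, …, b_d` are linearly independent.
If `pᵢ` is the projection with range `span (aᵢ)` and kernel `span {aₖ : k ≠ i}`, and
`qⱼ` is the projection with range `span (bⱼ)` and kernel `span {bₖ : k ≠ j}`, then
`tr (pᵢ ∘ qⱼ) ≠ 0` for all `i, j`. -/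
theorem trace_projections_ne_zero (d : ℕ) (hd : 1 ≤ d)
    (a b : Fin d → (Fin d → ℝ))
    (ha : LinearIndependent ℝ a) (hb : LinearIndependent ℝ b)
    (haspan : Submodule.span ℝ (Set.range a) = ⊤)
    (hbspan : Submodule.span ℝ (Set.range b) = ⊤)
    (hgen : ∀ c : Fin d → (Fin d ⊕ Fin d), Function.Injective c →
      LinearIndependent ℝ fun i => Sum.elim a b (c i))
    (i j : Fin d)
    (p q : (Fin d → ℝ) →ₗ[ℝ] (Fin d → ℝ))
    (hpp : p ∘ₗ p = p)
    (hpr : LinearMap.range p = ℝ ∙ a i)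
    (hpk : LinearMap.ker p = Submodule.span ℝ (a '' {k | k ≠ i}))
    (hqq : q ∘ₗ q = q)
    (hqr : LinearMap.range q = ℝ ∙ b j)
    (hqk : LinearMap.ker q = Submodule.span ℝ (b '' {k | k ≠ j})) :
    LinearMap.trace ℝ (Fin d → ℝ) (p ∘ₗ q) ≠ 0 :=
  (trace_projections_ne_zero_general ha hb hpr hpk hqr hqk).mpr
    ⟨linearIndependent_update_comp (Sum.elim a b) hgen Sum.inl_injective i (k := .inr j) (by simp),
      linearIndependent_update_comp (Sum.elim a b) hgen Sum.inr_injective j (k := .inl i) (by simp)⟩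
end

section
/- Let A and B be invertible d×d real matrices admitting proximal decompositions A = L₁·p₁ + … + L_d·p_d and B = M₁·q₁ + … + M_d·q_d. Then the sequence λ₁(Aⁿ·Bⁿ)/(λ₁(Aⁿ)·λ₁(Bⁿ)) converges to |tr(p₁·q₁)| as n → ∞. -/
open scoped BigOperators

/-- The spectral radius of a real `d × d` matrix: the maximum of the absolute values of
its complex eigenvalues, i.e. `λ₁(C)`. -/
noncomputable def specRad {d : ℕ} (C : Matrix (Fin d) (Fin d) ℝ) : ℝ :=
  (spectralRadius ℂ (C.map (Complex.ofReal))).toReal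

/-- `λ_d(C) = λ₁(C⁻¹)⁻¹`, the smallest absolute value of a complex eigenvalue of an
invertible matrix `C`. -/
noncomputable def lamLast {d : ℕ} (C : Matrix (Fin d) (Fin d) ℝ) : ℝ :=
  (specRad C⁻¹)⁻¹

/-- A proximal decomposition `A = L₁ p₁ + ⋯ + L_d p_d` of a `d × d` real matrix:
`|L₁| > |L₂| > ⋯ > |L_d| > 0` and the `pᵢ` are rank-one projections with
`pᵢ pⱼ = 0` for `i ≠ j`, `pᵢ² = pᵢ` and `p₁ + ⋯ + p_d = 1`. -/
structure ProximalDecomp {d : ℕ} (A : Matrix (Fin d) (Fin d) ℝ) where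
  L : Fin d → ℝ
  p : Fin d → Matrix (Fin d) (Fin d) ℝ
  strictAnti : StrictAnti fun i => |L i|
  abs_pos : ∀ i, 0 < |L i|
  rank_one : ∀ i, (p i).rank = 1
  mul_eq_zero : ∀ i j, i ≠ j → p i * p j = 0
  idem : ∀ i, p i * p i = p i
  sum_eq_one : ∑ i, p i = 1
  decomp : A = ∑ i, L i • p i

/-!
The spectrum of a complex matrix is upper hemicontinuous, as in any Banach algebra, and also lower
hemicontinuous, because `|det (μ - N)|` is the product of the distances from `μ` to the eigenvalues
of `N`. Hence `specRad` is continuous. It is also homogeneous, so the quotient in the theorem is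
unchanged when `A` and `B` are divided by their dominant eigenvalues; the powers of the rescaled
matrices converge to `p₁` and `q₁`, where the quotient equals `specRad (p₁ * q₁)`, and the spectral
radius of a matrix of rank at most one is the absolute value of its trace.
-/

open Filter Topology
open scoped ENNReal NNReal

section SpectralRadius

variable {𝕜 R : Type*} [NormedField 𝕜]

lemma enorm_le_spectralRadius [Ring R] [Algebra 𝕜 R] {a : R} {z : 𝕜} (hz : z ∈ spectrum 𝕜 a) :
    ‖z‖ₑ ≤ spectralRadius 𝕜 a :=
  le_iSup₂ (α := ℝ≥0∞) z hz

lemma lt_spectralRadius_iff [Ring R] [Algebra 𝕜 R] {a : R} {r : ℝ≥0∞} :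
    r < spectralRadius 𝕜 a ↔ ∃ z ∈ spectrum 𝕜 a, r < ‖z‖ₑ := by
  simp [spectralRadius, lt_iSup_iff, enorm_eq_nnnorm]

open scoped Pointwise in
lemma spectralRadius_smul [Ring R] [Algebra 𝕜 R] (c : 𝕜) (a : R) :
    spectralRadius 𝕜 (c • a) = ‖c‖ₑ * spectralRadius 𝕜 a := by
  rcases eq_or_ne c 0 with rfl | hc
  · simp
  · have hspec : spectrum 𝕜 (c • a) = c • spectrum 𝕜 a :=
      spectrum.unit_smul_eq_smul a (Units.mk0 c hc)
    simp only [spectralRadius, hspec, ← Set.image_smul, iSup_image, smul_eq_mul, nnnorm_mul,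
      ENNReal.coe_mul, ENNReal.mul_iSup, enorm_eq_nnnorm]

lemma spectralRadius_eq_one_of_isIdempotentElem [Ring R] [Algebra 𝕜 R] {p : R}
    (hp : IsIdempotentElem p) (hp0 : p ≠ 0) : spectralRadius 𝕜 p = 1 := by
  have one_mem : (1 : 𝕜) ∈ spectrum 𝕜 p := by
    rw [spectrum.mem_iff, map_one]
    exact fun hunit => hp0 (hunit.mul_right_eq_zero.1 hp.one_sub_mul_self)
  apply le_antisymm
  · refine iSup₂_le fun z hz => ?_
    rcases hp.spectrum_subset 𝕜 hz with rfl | rfl <;> simp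
  · simpa using enorm_le_spectralRadius one_mem

lemma spectralRadius_ne_top [NormedRing R] [NormedAlgebra 𝕜 R] [CompleteSpace R] (a : R) :
    spectralRadius 𝕜 a ≠ ∞ :=
  ne_top_of_le_ne_top (by simp [ENNReal.mul_eq_top])
    (spectrum.spectralRadius_le_pow_nnnorm_pow_one_div 𝕜 a 0)

variable {X : Type*} [TopologicalSpace X] [Ring R] [Algebra 𝕜 R] {f : X → R}

lemma upperSemicontinuous_spectralRadius
    (hf : UpperHemicontinuous fun x => spectrum 𝕜 (f x)) :
    UpperSemicontinuous fun x => spectralRadius 𝕜 (f x) := by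
  intro x y hy
  obtain ⟨r, hxr, hry⟩ := exists_between hy
  have hsub : spectrum 𝕜 (f x) ⊆ {z | ‖z‖ₑ < r} := fun z hz =>
    (enorm_le_spectralRadius hz).trans_lt hxr
  filter_upwards [hf.forall_isOpen x _ (isOpen_lt continuous_enorm continuous_const) hsub]
    with x' hx'
  exact (iSup₂_le fun z hz => (hx' hz).le).trans_lt hry

lemma lowerSemicontinuous_spectralRadius
    (hf : LowerHemicontinuous fun x => spectrum 𝕜 (f x)) :
    LowerSemicontinuous fun x => spectralRadius 𝕜 (f x) := by
  refine lowerSemicontinuous_iff_isOpen_preimage.2 fun r => ?_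
  have hopen : IsOpen {z : 𝕜 | r < ‖z‖ₑ} := isOpen_lt continuous_const continuous_enorm
  convert lowerHemicontinuous_iff_isOpen_inter_nonempty.1 hf _ hopen using 1
  ext x
  exact lt_spectralRadius_iff

end SpectralRadius

section MatrixSpectrum

variable {n 𝕜 : Type*} [Fintype n] [DecidableEq n] [NormedField 𝕜]

lemma nnnorm_eval_charpoly [IsAlgClosed 𝕜] (M : Matrix n n 𝕜) (μ : 𝕜) :
    ‖M.charpoly.eval μ‖₊ = (M.charpoly.roots.map fun z => ‖μ - z‖₊).prod := by
  rw [(IsAlgClosed.splits _).eval_eq_prod_roots_of_monic M.charpoly_monic]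
  exact (Multiset.prod_hom' _ (nnnormHom : 𝕜 →*₀ ℝ≥0) _).symm

lemma pow_card_le_nnnorm_eval_charpoly [IsAlgClosed 𝕜] {M : Matrix n n 𝕜} {μ : 𝕜} {ε : ℝ≥0}
    (h : ∀ z ∈ spectrum 𝕜 M, ε ≤ ‖μ - z‖₊) :
    ε ^ Fintype.card n ≤ ‖M.charpoly.eval μ‖₊ := by
  have hcard : (M.charpoly.roots.map fun z => ‖μ - z‖₊).card = Fintype.card n := by
    rw [Multiset.card_map, ← (IsAlgClosed.splits _).natDegree_eq_card_roots,
      M.charpoly_natDegree_eq_dim]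
  rw [nnnorm_eval_charpoly, ← hcard]
  refine Multiset.pow_card_le_prod (Multiset.forall_mem_map_iff.2 fun z hz => h z ?_)
  exact Matrix.mem_spectrum_of_isRoot_charpoly (Polynomial.isRoot_of_mem_roots hz)

lemma lowerHemicontinuous_spectrum_matrix [IsAlgClosed 𝕜] :
    LowerHemicontinuous (spectrum 𝕜 : Matrix n n 𝕜 → Set 𝕜) := by
  refine lowerHemicontinuous_iff.2 fun M => lowerHemicontinuousAt_iff.2 fun U hU ⟨μ, hμ, hμU⟩ => ?_
  obtain ⟨ε, hε, hball⟩ := Metric.isOpen_iff.1 hU μ hμU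
  lift ε to ℝ≥0 using hε.le
  have hcont : Continuous fun N : Matrix n n 𝕜 => ‖N.charpoly.eval μ‖₊ := by
    simp only [Matrix.eval_charpoly]
    fun_prop
  have hroot : ‖M.charpoly.eval μ‖₊ < ε ^ Fintype.card n := by
    rw [Matrix.mem_spectrum_iff_isRoot_charpoly.1 hμ, nnnorm_zero]
    exact pow_pos hε _
  filter_upwards [hcont.continuousAt.eventually_lt_const hroot] with N hN
  by_contra hdisj
  refine hN.not_ge (pow_card_le_nnnorm_eval_charpoly fun z hz => ?_)
  by_contra! hlt
  exact hdisj ⟨z, hz, hball (by simpa [dist_eq_norm, norm_sub_rev] using NNReal.coe_lt_coe.2 hlt)⟩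

open scoped Matrix.Norms.Operator in
lemma continuous_spectralRadius_matrix :
    Continuous (spectralRadius ℂ : Matrix n n ℂ → ℝ≥0∞) :=
  continuous_iff_lower_upperSemicontinuous.2
    ⟨lowerSemicontinuous_spectralRadius lowerHemicontinuous_spectrum_matrix,
      upperSemicontinuous_spectralRadius (upperHemicontinuous_spectrum ℂ _)⟩

end MatrixSpectrum

section RankOne

variable {m n K : Type*} [Fintype n]

lemma exists_eq_vecMulVec_of_rank_le_one [Field K] {P : Matrix m n K} (hP : P.rank ≤ 1) :
    ∃ u v, P = Matrix.vecMulVec u v := by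
  classical
  obtain ⟨u, hu⟩ := finrank_le_one_iff.1 hP
  choose v hv using fun j => hu ⟨P.mulVecLin (Pi.single j 1), LinearMap.mem_range_self _ _⟩
  refine ⟨u, v, Matrix.ext fun i j => ?_⟩
  have hcol : v j * (u : m → K) i = P i j := by
    simpa using congrFun (congrArg Subtype.val (hv j)) i
  rw [Matrix.vecMulVec_apply, mul_comm, hcol]

variable [DecidableEq n]

lemma mem_spectrum_vecMulVec_iff [Nonempty n] [Field K] (u v : n → K) (z : K) :
    z ∈ spectrum K (Matrix.vecMulVec u v) ↔
      z = u ⬝ᵥ v ∨ z ^ (Fintype.card n - 1) = 0 := by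
  rw [Matrix.mem_spectrum_iff_isRoot_charpoly, Matrix.charpoly_vecMulVec, ← mul_eq_mul_right_iff,
    mul_pow_sub_one Fintype.card_ne_zero]
  simp [Polynomial.IsRoot, sub_eq_zero]

lemma spectralRadius_vecMulVec [NormedField K] (u v : n → K) :
    spectralRadius K (Matrix.vecMulVec u v) = ‖u ⬝ᵥ v‖ₑ := by
  cases isEmpty_or_nonempty n
  · simp
  apply le_antisymm
  · refine iSup₂_le fun z hz => ?_
    rcases (mem_spectrum_vecMulVec_iff u v z).1 hz with rfl | hz
    · exact le_rfl
    · simp [eq_zero_of_pow_eq_zero hz]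
  · exact enorm_le_spectralRadius ((mem_spectrum_vecMulVec_iff u v _).2 (.inl rfl))

end RankOne

section SpecRad

variable {d : ℕ}

open scoped Matrix.Norms.Operator in
lemma continuous_specRad : Continuous (specRad : Matrix (Fin d) (Fin d) ℝ → ℝ) :=
  ENNReal.continuousOn_toReal.comp_continuous
    (continuous_spectralRadius_matrix.comp (continuous_id.matrix_map Complex.continuous_ofReal))
    fun _ => spectralRadius_ne_top _

lemma specRad_smul (c : ℝ) (C : Matrix (Fin d) (Fin d) ℝ) :
    specRad (c • C) = |c| * specRad C := by
  have hmap : (c • C).map Complex.ofReal = (c : ℂ) • C.map Complex.ofReal := by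
    ext i j
    simp
  rw [specRad, hmap, spectralRadius_smul, ENNReal.toReal_mul, toReal_enorm, Complex.norm_real,
    Real.norm_eq_abs, specRad]

lemma specRad_eq_one_of_isIdempotentElem {P : Matrix (Fin d) (Fin d) ℝ} (hP : IsIdempotentElem P)
    (hP0 : P ≠ 0) : specRad P = 1 := by
  have hmap0 : Complex.ofRealHom.mapMatrix P ≠ 0 :=
    (map_ne_zero_iff _ (Matrix.map_injective Complex.ofReal_injective)).2 hP0
  exact (congrArg ENNReal.toReal (spectralRadius_eq_one_of_isIdempotentElem
    (hP.map Complex.ofRealHom.mapMatrix) hmap0)).trans ENNReal.toReal_one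

lemma specRad_eq_abs_trace_of_rank_le_one {C : Matrix (Fin d) (Fin d) ℝ} (hC : C.rank ≤ 1) :
    specRad C = |C.trace| := by
  obtain ⟨u, v, rfl⟩ := exists_eq_vecMulVec_of_rank_le_one hC
  have hmap : (Matrix.vecMulVec u v).map Complex.ofReal =
      Matrix.vecMulVec (Complex.ofReal ∘ u) (Complex.ofReal ∘ v) := by
    ext i j
    simp [Matrix.vecMulVec_apply]
  have hdot : (Complex.ofReal ∘ u) ⬝ᵥ (Complex.ofReal ∘ v) = ((u ⬝ᵥ v : ℝ) : ℂ) := by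
    simp [dotProduct]
  rw [specRad, hmap, spectralRadius_vecMulVec, hdot, Matrix.trace_vecMulVec, toReal_enorm,
    Complex.norm_real, Real.norm_eq_abs]

lemma tendsto_specRad_mul_div {ι : Type*} {l : Filter ι} {a b : ι → ℝ}
    {X Y : ι → Matrix (Fin d) (Fin d) ℝ} {P Q : Matrix (Fin d) (Fin d) ℝ}
    (hX : Tendsto (fun n => a n • X n) l (𝓝 P)) (hY : Tendsto (fun n => b n • Y n) l (𝓝 Q))
    (hP : specRad P ≠ 0) (hQ : specRad Q ≠ 0) :
    Tendsto (fun n => specRad (X n * Y n) / (specRad (X n) * specRad (Y n))) l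
      (𝓝 (specRad (P * Q) / (specRad P * specRad Q))) := by
  have hlimX := (continuous_specRad.tendsto P).comp hX
  have hlimY := (continuous_specRad.tendsto Q).comp hY
  have hlimXY := (continuous_specRad.tendsto (P * Q)).comp (hX.mul hY)
  refine (hlimXY.div (hlimX.mul hlimY) (mul_ne_zero hP hQ)).congr' ?_
  filter_upwards [hlimX.eventually_ne hP, hlimY.eventually_ne hQ] with n hXn hYn
  simp only [Function.comp_apply, specRad_smul] at hXn hYn
  simp only [Pi.div_apply, Function.comp_apply, smul_mul_smul_comm, specRad_smul, abs_mul]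
  rw [mul_mul_mul_comm,
    mul_div_mul_left _ _ (mul_ne_zero (left_ne_zero_of_mul hXn) (left_ne_zero_of_mul hYn))]

end SpecRad

section PowerLimits

lemma isIdempotentElem_of_tendsto_pow {M : Type*} [Monoid M] [TopologicalSpace M] [ContinuousMul M]
    [T2Space M] {x p : M} (h : Tendsto (fun n : ℕ => x ^ n) atTop (𝓝 p)) : IsIdempotentElem p := by
  have hdouble : Tendsto (fun n : ℕ => x ^ (n + n)) atTop (𝓝 p) :=
    h.comp (tendsto_atTop_mono (fun n => Nat.le_add_left n n) tendsto_id)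
  simp only [pow_add] at hdouble
  exact tendsto_nhds_unique (h.mul h) hdouble

variable {I R 𝕜 : Type*} [Fintype I] [Ring R] {e : I → R}

lemma sum_smul_pow_of_completeOrthogonalIdempotents [CommSemiring 𝕜] [Algebra 𝕜 R]
    (he : CompleteOrthogonalIdempotents e) (c : I → 𝕜) (n : ℕ) :
    (∑ i, c i • e i) ^ n = ∑ i, c i ^ n • e i := by
  classical
  induction n with
  | zero => simp [he.complete]
  | succ n ih => simp [pow_succ', ih, Finset.sum_mul_sum, he.mul_eq, smul_smul, mul_comm (c _)]

lemma tendsto_sum_smul_pow_of_completeOrthogonalIdempotents [NormedField 𝕜] [Algebra 𝕜 R]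
    [TopologicalSpace R] [ContinuousAdd R] [ContinuousSMul 𝕜 R]
    (he : CompleteOrthogonalIdempotents e) {c : I → 𝕜} {i : I} (hi : c i = 1)
    (hc : ∀ j ≠ i, ‖c j‖ < 1) :
    Tendsto (fun n : ℕ => (∑ j, c j • e j) ^ n) atTop (𝓝 (e i)) := by
  classical
  have hei : e i = ∑ j, (if j = i then (1 : 𝕜) else 0) • e j := by simp
  simp only [sum_smul_pow_of_completeOrthogonalIdempotents he]
  rw [hei]
  refine tendsto_finsetSum _ fun j _ => Tendsto.smul_const ?_ _
  split_ifs with hj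
  · exact tendsto_const_nhds.congr fun n => by rw [hj, hi, one_pow]
  · exact tendsto_pow_atTop_nhds_zero_of_norm_lt_one (hc j hj)

end PowerLimits

namespace ProximalDecomp

variable {d : ℕ} {A : Matrix (Fin d) (Fin d) ℝ} (D : ProximalDecomp A)

include D

lemma completeOrthogonalIdempotents : CompleteOrthogonalIdempotents D.p where
  idem := D.idem
  ortho := D.mul_eq_zero
  complete := D.sum_eq_one

lemma p_ne_zero (i : Fin d) : D.p i ≠ 0 := fun h => by
  simpa [h] using D.rank_one i

lemma tendsto_inv_smul_pow (hd : 0 < d) :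
    Tendsto (fun n : ℕ => ((D.L ⟨0, hd⟩)⁻¹ • A) ^ n) atTop (𝓝 (D.p ⟨0, hd⟩)) := by
  have hL : D.L ⟨0, hd⟩ ≠ 0 := _root_.abs_pos.1 (D.abs_pos _)
  have hA : (D.L ⟨0, hd⟩)⁻¹ • A = ∑ i, ((D.L ⟨0, hd⟩)⁻¹ * D.L i) • D.p i := by
    simpa only [Finset.smul_sum, smul_smul] using congrArg ((D.L ⟨0, hd⟩)⁻¹ • ·) D.decomp
  rw [hA]
  refine tendsto_sum_smul_pow_of_completeOrthogonalIdempotents D.completeOrthogonalIdempotents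
    (inv_mul_cancel₀ hL) fun j hj => ?_
  have hlt : |D.L j| < |D.L ⟨0, hd⟩| :=
    D.strictAnti (Fin.lt_def.2 (Nat.pos_of_ne_zero fun h => hj (Fin.ext h)))
  rwa [norm_mul, norm_inv, Real.norm_eq_abs, Real.norm_eq_abs, inv_mul_lt_one₀ (D.abs_pos _)]

end ProximalDecomp

theorem specRad_prod_tendsto_general {d : ℕ} {A B P Q : Matrix (Fin d) (Fin d) ℝ} {a b : ℝ}
    (hA : Tendsto (fun n : ℕ => (a • A) ^ n) atTop (𝓝 P))
    (hB : Tendsto (fun n : ℕ => (b • B) ^ n) atTop (𝓝 Q)) (hP : P.rank = 1) (hQ : Q ≠ 0) :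
    Tendsto (fun n : ℕ => specRad (A ^ n * B ^ n) / (specRad (A ^ n) * specRad (B ^ n))) atTop
      (𝓝 |(P * Q).trace|) := by
  have hP0 : P ≠ 0 := fun h => by simp [h] at hP
  have hρP : specRad P = 1 :=
    specRad_eq_one_of_isIdempotentElem (isIdempotentElem_of_tendsto_pow hA) hP0
  have hρQ : specRad Q = 1 :=
    specRad_eq_one_of_isIdempotentElem (isIdempotentElem_of_tendsto_pow hB) hQ
  have hρPQ : specRad (P * Q) = |(P * Q).trace| :=
    specRad_eq_abs_trace_of_rank_le_one ((Matrix.rank_mul_le_left P Q).trans hP.le)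
  simp only [smul_pow] at hA hB
  simpa [hρP, hρQ, hρPQ] using tendsto_specRad_mul_div hA hB (by simp [hρP]) (by simp [hρQ])

open Filter in
/-- If `A` and `B` are invertible `d × d` real matrices with proximal decompositions,
then `λ₁(Aⁿ Bⁿ) / (λ₁(Aⁿ) λ₁(Bⁿ)) → |tr (p₁ q₁)|` as `n → ∞`. -/
theorem specRad_prod_tendsto (d : ℕ) (hd : 0 < d)
    (A B : Matrix (Fin d) (Fin d) ℝ) (hA : IsUnit A) (hB : IsUnit B)
    (DA : ProximalDecomp A) (DB : ProximalDecomp B) :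
    Tendsto (fun n : ℕ =>
        specRad (A ^ n * B ^ n) / (specRad (A ^ n) * specRad (B ^ n))) atTop
      (nhds |(DA.p ⟨0, hd⟩ * DB.p ⟨0, hd⟩).trace|) :=
  specRad_prod_tendsto_general (DA.tendsto_inv_smul_pow hd) (DB.tendsto_inv_smul_pow hd)
    (DA.rank_one _) (DB.p_ne_zero _)
end

section
/- Let L₁, L₂, L₃, a₁, a₂, a₃ : ℝ → ℝ be functions differentiable at 0 with L₁(0) > L₂(0) > L₃(0) > 0. Suppose that L₁'(0)/L₁(0) = L₃'(0)/L₃(0), that L₂'(0)/L₂(0) = −2·L₁'(0)/L₁(0), that a₁(0) + a₂(0) + a₃(0) ≠ 0, and that there exists N ∈ ℕ such that for every integer n ≥ N the function t ↦ L₁(t)ⁿ·a₁(t) + L₂(t)ⁿ·a₂(t) + L₃(t)ⁿ·a₃(t) has derivative 0 at t = 0. Then L₁'(0) = L₂'(0) = L₃'(0) = 0. -/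
/-! The derivative at `z` of `∑ i, L i ^ (n + 1) * a i` has the form
`∑ i, (n * p i + q i) * x i ^ n` with `x i = L i z` and `p i = (L i)' z * a i z`. If such a sum
vanishes for all `n ≥ N`, then by linearity the functional
`P ↦ ∑ i, (p i * x i * P'(x i) + q i * P(x i))` kills every polynomial divisible by `X ^ N`.
Choosing such a `P` with a simple zero at `x i ≠ 0` and a double zero at every other `x j` isolates
`p i = 0`. Hence the derivative of `L i` vanishes as soon as `a i z ≠ 0`, and the proportionality
of the logarithmic derivatives carries this over to all the `L j`. -/

section ConfluentExponentialSum

open Polynomial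

variable {ι R : Type*} [Fintype ι] {x p q : ι → R} {N : ℕ}

theorem sum_eval_derivative_add_eval_eq_zero [CommSemiring R]
    (h : ∀ n, N ≤ n → ∑ i, (n * p i + q i) * x i ^ n = 0) (P : R[X]) :
    ∑ i, (p i * x i * (derivative (X ^ N * P)).eval (x i) +
      q i * (X ^ N * P).eval (x i)) = 0 := by
  induction P using Polynomial.induction_on' with
  | add P Q hP hQ =>
    rw [← add_zero (0 : R), ← congrArg₂ (· + ·) hP hQ, ← Finset.sum_add_distrib]
    refine Finset.sum_congr rfl fun i _ => ?_
    simp only [mul_add, eval_add, derivative_add]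
    ring
  | monomial k c =>
    rw [← mul_zero c, ← h (k + N) (Nat.le_add_left N k), Finset.mul_sum]
    refine Finset.sum_congr rfl fun i _ => ?_
    rw [X_pow_mul_monomial, derivative_monomial, eval_monomial, eval_monomial]
    cases k + N with
    | zero => simp [mul_comm]
    | succ n => rw [Nat.add_sub_cancel]; ring

theorem linear_coeff_eq_zero_of_sum_mul_pow_eq_zero [CommRing R] [IsDomain R] {i : ι}
    (hi : x i ≠ 0) (hne : ∀ j ≠ i, x j ≠ x i)
    (h : ∀ n, N ≤ n → ∑ j, (n * p j + q j) * x j ^ n = 0) : p i = 0 := by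
  classical
  set Q : R[X] := ∏ j ∈ Finset.univ.erase i, (X - C (x j)) ^ 2 with hQ
  have eval_Q_ne_zero : Q.eval (x i) ≠ 0 := by
    rw [hQ, eval_prod, Finset.prod_ne_zero_iff]
    intro j hj
    simpa [sub_eq_zero] using (hne j (Finset.ne_of_mem_erase hj)).symm
  have key := sum_eval_derivative_add_eval_eq_zero h ((X - C (x i)) * Q)
  rw [Fintype.sum_eq_single i] at key
  · simpa [hi, eval_Q_ne_zero] using key
  · intro j hj
    obtain ⟨S, hS⟩ : (X - C (x j)) ^ 2 ∣ Q :=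
      Finset.dvd_prod_of_mem _ (Finset.mem_erase.2 ⟨hj, Finset.mem_univ j⟩)
    simp [hS, derivative_pow]

end ConfluentExponentialSum

section PowerSum

variable {ι 𝕜 : Type*} [Fintype ι] [NontriviallyNormedField 𝕜] {z : 𝕜} {N : ℕ}

theorem hasDerivAt_sum_pow_succ_mul {A : Type*} [NormedCommRing A] [NormedAlgebra 𝕜 A]
    {L a : ι → 𝕜 → A} {L' a' : ι → A} (hL : ∀ i, HasDerivAt (L i) (L' i) z)
    (ha : ∀ i, HasDerivAt (a i) (a' i) z) (n : ℕ) :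
    HasDerivAt (fun t => ∑ i, L i t ^ (n + 1) * a i t)
      (∑ i, (n * (L' i * a i z) + (L' i * a i z + L i z * a' i)) * L i z ^ n) z := by
  refine HasDerivAt.fun_sum fun i _ => (((hL i).fun_pow (n + 1)).fun_mul (ha i)).congr_deriv ?_
  rw [Nat.add_sub_cancel]
  push_cast
  ring

theorem deriv_mul_eq_zero_of_deriv_sum_pow_mul_eq_zero {A : Type*} [NormedCommRing A] [IsDomain A]
    [NormedAlgebra 𝕜 A] {L a : ι → 𝕜 → A} (hL : ∀ i, DifferentiableAt 𝕜 (L i) z)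
    (ha : ∀ i, DifferentiableAt 𝕜 (a i) z) {i : ι} (hi : L i z ≠ 0)
    (hne : ∀ j ≠ i, L j z ≠ L i z)
    (hder : ∀ n, N ≤ n → deriv (fun t => ∑ j, L j t ^ n * a j t) z = 0) :
    deriv (L i) z * a i z = 0 :=
  linear_coeff_eq_zero_of_sum_mul_pow_eq_zero (x := fun j => L j z)
    (p := fun j => deriv (L j) z * a j z) hi hne fun n hn =>
      (hasDerivAt_sum_pow_succ_mul (fun j => (hL j).hasDerivAt)
        (fun j => (ha j).hasDerivAt) n).deriv.symm.trans (hder (n + 1) (Nat.le_succ_of_le hn))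

theorem derivative_eigenvalues_vanish_general {F : Type*} [NontriviallyNormedField F]
    [NormedAlgebra 𝕜 F] {L a : ι → 𝕜 → F} (hL : ∀ i, DifferentiableAt 𝕜 (L i) z)
    (ha : ∀ i, DifferentiableAt 𝕜 (a i) z) (hL0 : ∀ i, L i z ≠ 0)
    (hinj : Function.Injective fun i => L i z) {c : F} {w : ι → F} (hw : ∀ i, w i ≠ 0)
    (hlog : ∀ i, logDeriv (L i) z = w i * c) (ha0 : ∃ i, a i z ≠ 0)
    (hder : ∀ n, N ≤ n → deriv (fun t => ∑ i, L i t ^ n * a i t) z = 0) (i : ι) :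
    deriv (L i) z = 0 := by
  have deriv_eq_zero_iff (j : ι) : deriv (L j) z = 0 ↔ c = 0 := by
    simpa [logDeriv_apply, hL0 j, hw j] using congrArg (· = 0) (hlog j)
  obtain ⟨j, hj⟩ := ha0
  have deriv_mul_eq_zero : deriv (L j) z * a j z = 0 :=
    deriv_mul_eq_zero_of_deriv_sum_pow_mul_eq_zero hL ha (hL0 j) (fun _ hk => hinj.ne hk) hder
  have deriv_j : deriv (L j) z = 0 := (mul_eq_zero.1 deriv_mul_eq_zero).resolve_right hj
  exact (deriv_eq_zero_iff i).2 ((deriv_eq_zero_iff j).1 deriv_j)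

end PowerSum

/-- Suppose `L₁, L₂, L₃, a₁, a₂, a₃ : ℝ → ℝ` are differentiable at `0` with
`L₁(0) > L₂(0) > L₃(0) > 0`, `L₁'(0)/L₁(0) = L₃'(0)/L₃(0)`,
`L₂'(0)/L₂(0) = -2 L₁'(0)/L₁(0)`, and `a₁(0) + a₂(0) + a₃(0) ≠ 0`. If for all large `n`
the function `t ↦ L₁(t)ⁿ a₁(t) + L₂(t)ⁿ a₂(t) + L₃(t)ⁿ a₃(t)` has derivative `0` at
`t = 0`, then `L₁'(0) = L₂'(0) = L₃'(0) = 0`. -/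
theorem derivative_eigenvalues_vanish
    (L₁ L₂ L₃ a₁ a₂ a₃ : ℝ → ℝ)
    (hL₁ : DifferentiableAt ℝ L₁ 0) (hL₂ : DifferentiableAt ℝ L₂ 0)
    (hL₃ : DifferentiableAt ℝ L₃ 0)
    (ha₁ : DifferentiableAt ℝ a₁ 0) (ha₂ : DifferentiableAt ℝ a₂ 0)
    (ha₃ : DifferentiableAt ℝ a₃ 0)
    (h3pos : 0 < L₃ 0) (h32 : L₃ 0 < L₂ 0) (h21 : L₂ 0 < L₁ 0)
    (h13 : deriv L₁ 0 / L₁ 0 = deriv L₃ 0 / L₃ 0)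
    (h2 : deriv L₂ 0 / L₂ 0 = -2 * (deriv L₁ 0 / L₁ 0))
    (hsum : a₁ 0 + a₂ 0 + a₃ 0 ≠ 0)
    (N : ℕ)
    (hder : ∀ n : ℕ, N ≤ n →
      deriv (fun t => L₁ t ^ n * a₁ t + L₂ t ^ n * a₂ t + L₃ t ^ n * a₃ t) 0 = 0) :
    deriv L₁ 0 = 0 ∧ deriv L₂ 0 = 0 ∧ deriv L₃ 0 = 0 := by
  have hanti : StrictAnti fun i => ![L₁, L₂, L₃] i 0 := by
    simp [Fin.strictAnti_iff_succ_lt, Fin.forall_fin_succ, h21, h32]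
  have ha0 : ∃ i, ![a₁, a₂, a₃] i 0 ≠ 0 := by
    contrapose! hsum
    simp_all [Fin.forall_fin_succ]
  simpa [Fin.forall_fin_succ] using derivative_eigenvalues_vanish_general (L := ![L₁, L₂, L₃])
    (w := ![1, -2, 1]) (c := logDeriv L₁ 0)
    (by simp [Fin.forall_fin_succ, hL₁, hL₂, hL₃]) (by simp [Fin.forall_fin_succ, ha₁, ha₂, ha₃])
    (fun i => (h3pos.trans_le (hanti.antitone (Fin.le_last i))).ne') hanti.injective
    (by simp [Fin.forall_fin_succ]) (by simp [Fin.forall_fin_succ, logDeriv_apply, h2, h13]) ha0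
    (by simpa [Fin.sum_univ_three] using hder)
end
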